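/- Let f : ℝ² → ℝ² be a C^∞ map with f(0)=0 which has corank one at 0. Let φ, ψ : ℝ² → ℝ² be C^∞ maps with φ(0)=ψ(0)=0 whose derivatives at 0 are invertible, and let g = ψ∘f∘φ on a neighborhood of 0. Let η be a null vector field for f and η' a null vector field for g. Then for every integer r ≥ 3, the condition "dλ_f(0) ≠ 0, (η^i λ_f)(0) = 0 for all 1 ≤ i ≤ r−2, and (η^{r−1} λ_f)(0) ≠ 0" holds if and only if the condition "dλ_g(0) ≠ 0, (η'^i λ_g)(0) = 0 for all 1 ≤ i ≤ r−2, and (η'^{r−1} λ_g)(0) ≠ 0" holds. In particular these conditions do not depend on the choice of local coordinates in source and target nor on the choice of null vector field. -/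

import Mathlib

open Filter Topology

noncomputable section

/-- Directional derivative of a scalar function. -/
def dop (v : ℝ × ℝ) (g : ℝ × ℝ → ℝ) : ℝ × ℝ → ℝ :=
  fun p => fderiv ℝ g p v

/-- Partial derivative operator in the first coordinate. -/
def pdx : (ℝ × ℝ → ℝ) → ℝ × ℝ → ℝ := dop (1, 0)

/-- Partial derivative operator in the second coordinate. -/
def pdy : (ℝ × ℝ → ℝ) → ℝ × ℝ → ℝ := dop (0, 1)

/-- Taylor coefficient `a_{ij} = ∂_x^i ∂_y^j g(0,0) / (i! j!)` of `g` at the origin. -/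
def tcoeff (g : ℝ × ℝ → ℝ) (i j : ℕ) : ℝ :=
  (pdx^[i] (pdy^[j] g)) 0 / (Nat.factorial i * Nat.factorial j)

/-- The Jacobian determinant `λ_f` of a map `f : ℝ² → ℝ²`. -/
def jacDet (f : ℝ × ℝ → ℝ × ℝ) (p : ℝ × ℝ) : ℝ :=
  (fderiv ℝ f p (1, 0)).1 * (fderiv ℝ f p (0, 1)).2 -
    (fderiv ℝ f p (1, 0)).2 * (fderiv ℝ f p (0, 1)).1

/-- `f` has corank one at `0` : the derivative of `f` at `0` has rank one. -/
def CorankOne (f : ℝ × ℝ → ℝ × ℝ) : Prop :=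
  LinearMap.rank ((fderiv ℝ f 0).toLinearMap) = 1

/-- `η` is a null vector field for `f` near `0`. -/
def IsNullVF (f η : ℝ × ℝ → ℝ × ℝ) : Prop :=
  η 0 ≠ 0 ∧ ∃ U ∈ 𝓝 (0 : ℝ × ℝ),
    ContDiffOn ℝ (⊤ : ℕ∞) η U ∧ ∀ p ∈ U, jacDet f p = 0 → fderiv ℝ f p (η p) = 0

/-- The derivative `(ηg)(p) = Dg(p)(η(p))` of `g` along the vector field `η`. -/
def etaD (η : ℝ × ℝ → ℝ × ℝ) (g : ℝ × ℝ → ℝ) : ℝ × ℝ → ℝ :=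
  fun p => fderiv ℝ g p (η p)

/-- The iterated derivative `η^k g` along the vector field `η`. -/
def etaIter (η : ℝ × ℝ → ℝ × ℝ) : ℕ → (ℝ × ℝ → ℝ) → ℝ × ℝ → ℝ
  | 0, g => g
  | k + 1, g => etaD η (etaIter η k g)

/-- The Hessian matrix of second partial derivatives of `g` at `0`. -/
def hess (g : ℝ × ℝ → ℝ) : Matrix (Fin 2) (Fin 2) ℝ :=
  !![pdx (pdx g) 0, pdx (pdy g) 0; pdy (pdx g) 0, pdy (pdy g) 0]

/-- `A^r`-equivalence of the `r`-jets at `0` of two map-germs `(ℝ²,0) → (ℝ²,0)`. -/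
def JetEquiv (r : ℕ) (f g : ℝ × ℝ → ℝ × ℝ) : Prop :=
  ∃ φ ψ : ℝ × ℝ → ℝ × ℝ,
    ContDiff ℝ (⊤ : ℕ∞) φ ∧ ContDiff ℝ (⊤ : ℕ∞) ψ ∧ φ 0 = 0 ∧ ψ 0 = 0 ∧
    Function.Bijective (⇑(fderiv ℝ φ 0)) ∧ Function.Bijective (⇑(fderiv ℝ ψ 0)) ∧
    ∀ i ≤ r, iteratedFDeriv ℝ i (ψ ∘ f ∘ φ) 0 = iteratedFDeriv ℝ i g 0

/-- `A`-equivalence of two map-germs `(ℝ²,0) → (ℝ²,0)`. -/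
def AEquiv (f g : ℝ × ℝ → ℝ × ℝ) : Prop :=
  ∃ φ ψ : ℝ × ℝ → ℝ × ℝ,
    ContDiff ℝ (⊤ : ℕ∞) φ ∧ ContDiff ℝ (⊤ : ℕ∞) ψ ∧ φ 0 = 0 ∧ ψ 0 = 0 ∧
    Function.Bijective (⇑(fderiv ℝ φ 0)) ∧ Function.Bijective (⇑(fderiv ℝ ψ 0)) ∧
    ∀ᶠ p in 𝓝 (0 : ℝ × ℝ), ψ (f (φ p)) = g p

/-- `f` has the form `(x, g(x,y))` where `g` is `C^∞` and the Taylor coefficients of `g`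
of total degree `< N` at the origin are prescribed by `P`. -/
def HasForm (f : ℝ × ℝ → ℝ × ℝ) (g : ℝ × ℝ → ℝ) (N : ℕ) (P : ℕ → ℕ → ℝ) : Prop :=
  ContDiff ℝ (⊤ : ℕ∞) g ∧ (∀ p, f p = (p.1, g p)) ∧
    ∀ i j, i + j < N → tcoeff g i j = P i j

/-! For `l` with `l x = 0` and `dl x ≠ 0`, the condition on the iterated derivatives `X^i l` says
that `l` vanishes at `x` to an exact order along the vector field `X`. Lagrange multipliers show
that a function zero on `{l = 0}` vanishes at `x` along `X` to at least the order of `l`, so this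
order depends on the zero locus of `l` only. This absorbs the unit `u` in `λ_g = u * λ_f ∘ φ`, and
it allows relations between derivatives to be checked on the singular set alone. There `Dφ η'` and
`η ∘ φ` both lie in the line `ker Df`, so `Dφ η' = c • η ∘ φ` with `c` smooth and `c x ≠ 0`, and the
functions `G_j = (η^j λ_f) ∘ φ` satisfy `η' G_j = c * G_{j+1}` on `{G_0 = 0}`: the order of `G_0`
along `η'` is the first `j` with `G_j x ≠ 0`, i.e. the order of `λ_f` along `η`. -/

open scoped ContDiff

section Smooth

variable {E F : Type*} [NormedAddCommGroup E] [NormedSpace ℝ E] [NormedAddCommGroup F]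
  [NormedSpace ℝ F] {x : E} {n : WithTop ℕ∞}

theorem eventually_differentiableAt_of_contDiffAt {f : E → F} (hf : ContDiffAt ℝ n f x)
    (hn : n ≠ 0) : ∀ᶠ p in 𝓝 x, DifferentiableAt ℝ f p :=
  ((hf.of_le (ENat.one_le_iff_ne_zero_withTop.2 hn)).eventually (by simp)).mono
    fun _ hp => hp.differentiableAt one_ne_zero

-- Dividing by the component along a functional `ℓ` with `ℓ (W x) ≠ 0` makes the factor smooth
-- off `s` as well.
theorem exists_contDiffAt_smul_eq {V W : E → F} {s : Set E} (hV : ContDiffAt ℝ n V x)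
    (hW : ContDiffAt ℝ n W x) (hWx : W x ≠ 0) (h : ∀ᶠ p in 𝓝[s] x, ∃ k : ℝ, V p = k • W p) :
    ∃ c : E → ℝ, ContDiffAt ℝ n c x ∧ ∀ᶠ p in 𝓝[s] x, V p = c p • W p := by
  obtain ⟨ℓ, hℓ⟩ := SeparatingDual.exists_ne_zero (R := ℝ) hWx
  have hℓV : ContDiffAt ℝ n (fun p => ℓ (V p)) x := ℓ.contDiff.contDiffAt.comp x hV
  have hℓW : ContDiffAt ℝ n (fun p => ℓ (W p)) x := ℓ.contDiff.contDiffAt.comp x hW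
  refine ⟨fun p => ℓ (V p) / ℓ (W p), hℓV.div hℓW hℓ, ?_⟩
  filter_upwards [h, nhdsWithin_le_nhds (hℓW.continuousAt.eventually_ne hℓ)] with p ⟨k, hk⟩ hp
  simp [hk, hp]

theorem exists_fderiv_eq_smul_of_eqOn_zeroLocus [CompleteSpace E] {l h : E → ℝ}
    (hl : ContDiffAt ℝ n l x) (hh : ContDiffAt ℝ n h x) (hn : n ≠ 0) (hlx : l x = 0)
    (hdl : fderiv ℝ l x ≠ 0) (hzero : ∀ᶠ p in 𝓝[{p | l p = 0}] x, h p = 0) :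
    ∃ k : ℝ, fderiv ℝ h x = k • fderiv ℝ l x := by
  have hhx : h x = 0 := hzero.self_of_nhdsWithin hlx
  have hextr : IsLocalExtrOn h {p | l p = l x} x :=
    Or.inl (by simpa [IsMinFilter, hlx, hhx] using hzero.mono fun p hp => hp.ge)
  obtain ⟨a, b, hab, hcomb⟩ := hextr.exists_multipliers_of_hasStrictFDerivAt_1d
    (hl.hasStrictFDerivAt hn) (hh.hasStrictFDerivAt hn)
  have hb : b ≠ 0 := by
    rintro rfl
    simp_all
  exact ⟨-(b⁻¹ * a), by
    rw [neg_smul, mul_smul, ← smul_neg, eq_neg_of_add_eq_zero_left hcomb, neg_neg,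
      inv_smul_smul₀ hb]⟩

end Smooth

section FieldDeriv

variable {E : Type*} [NormedAddCommGroup E] [NormedSpace ℝ E] {X : E → E} {F G k : E → ℝ} {x : E}
  {m n : WithTop ℕ∞}

/-- The derivative of the function `F` along the vector field `X`; this is `etaD` on an arbitrary
normed space, so that its iterates `(fieldDeriv X)^[i]` extend `etaIter`. -/
def fieldDeriv (X : E → E) (F : E → ℝ) : E → ℝ :=
  fun p => fderiv ℝ F p (X p)

theorem etaIter_eq_iterate_fieldDeriv (η : ℝ × ℝ → ℝ × ℝ) (i : ℕ) (g : ℝ × ℝ → ℝ) :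
    etaIter η i g = (fieldDeriv η)^[i] g := by
  induction i with
  | zero => rfl
  | succ i ih => rw [Function.iterate_succ_apply', ← ih]; rfl

theorem contDiffAt_fieldDeriv (hX : ContDiffAt ℝ m X x) (hF : ContDiffAt ℝ n F x)
    (hmn : m + 1 ≤ n) : ContDiffAt ℝ m (fieldDeriv X F) x :=
  (hF.fderiv_right hmn).clm_apply hX

theorem contDiffAt_iterate_fieldDeriv (hX : ContDiffAt ℝ ∞ X x) (hF : ContDiffAt ℝ ∞ F x)
    (i : ℕ) : ContDiffAt ℝ ∞ ((fieldDeriv X)^[i] F) x := by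
  induction i with
  | zero => exact hF
  | succ i ih =>
    rw [Function.iterate_succ_apply']
    exact contDiffAt_fieldDeriv hX ih le_rfl

theorem fieldDeriv_congr (h : F =ᶠ[𝓝 x] G) : fieldDeriv X F =ᶠ[𝓝 x] fieldDeriv X G :=
  (h.fderiv (𝕜 := ℝ)).mono fun p hp => by simp only [fieldDeriv, hp]

theorem fieldDeriv_add (hF : ContDiffAt ℝ n F x) (hG : ContDiffAt ℝ n G x) (hn : n ≠ 0) :
    fieldDeriv X (F + G) =ᶠ[𝓝 x] fieldDeriv X F + fieldDeriv X G := by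
  filter_upwards [eventually_differentiableAt_of_contDiffAt hF hn,
    eventually_differentiableAt_of_contDiffAt hG hn] with p hFp hGp
  simp [fieldDeriv, fderiv_add hFp hGp]

theorem fieldDeriv_mul (hk : ContDiffAt ℝ n k x) (hF : ContDiffAt ℝ n F x) (hn : n ≠ 0) :
    fieldDeriv X (k * F) =ᶠ[𝓝 x] k * fieldDeriv X F + fieldDeriv X k * F := by
  filter_upwards [eventually_differentiableAt_of_contDiffAt hk hn,
    eventually_differentiableAt_of_contDiffAt hF hn] with p hkp hFp
  simp [fieldDeriv, fderiv_mul hkp hFp, mul_comm (F p)]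

end FieldDeriv

section VanishesToOrder

variable {E : Type*} [NormedAddCommGroup E] [NormedSpace ℝ E] {X : E → E} {F G k l : E → ℝ} {x : E}
  {m n : ℕ}

/-- `F` vanishes to order at least `m` at `x` along the vector field `X`: the iterated derivatives
`F, X F, …, X^(m-1) F` all vanish at `x`. -/
def VanishesToOrder (X : E → E) (x : E) (m : ℕ) (F : E → ℝ) : Prop :=
  ∀ i < m, (fieldDeriv X)^[i] F x = 0

theorem vanishesToOrder_succ :
    VanishesToOrder X x (m + 1) F ↔ F x = 0 ∧ VanishesToOrder X x m (fieldDeriv X F) :=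
  Nat.forall_lt_succ_left

theorem vanishesToOrder_succ_iff_and_iterate :
    VanishesToOrder X x (m + 1) F ↔ VanishesToOrder X x m F ∧ (fieldDeriv X)^[m] F x = 0 :=
  Nat.forall_lt_succ_right

namespace VanishesToOrder

theorem mono (hF : VanishesToOrder X x n F) (hmn : m ≤ n) : VanishesToOrder X x m F :=
  fun i hi => hF i (hi.trans_le hmn)

theorem congr (hF : VanishesToOrder X x m F) (hFG : F =ᶠ[𝓝 x] G) : VanishesToOrder X x m G := by
  induction m generalizing F G with
  | zero => exact fun i hi => absurd hi i.not_lt_zero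
  | succ m ih =>
    rw [vanishesToOrder_succ] at hF ⊢
    exact ⟨hFG.eq_of_nhds ▸ hF.1, ih hF.2 (fieldDeriv_congr hFG)⟩

theorem add (hX : ContDiffAt ℝ ∞ X x) (hFs : ContDiffAt ℝ ∞ F x) (hGs : ContDiffAt ℝ ∞ G x)
    (hF : VanishesToOrder X x m F) (hG : VanishesToOrder X x m G) :
    VanishesToOrder X x m (F + G) := by
  induction m generalizing F G with
  | zero => exact fun i hi => absurd hi i.not_lt_zero
  | succ m ih =>
    rw [vanishesToOrder_succ] at hF hG ⊢
    refine ⟨by simp [hF.1, hG.1], congr ?_ (fieldDeriv_add hFs hGs (by simp)).symm⟩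
    exact ih (contDiffAt_fieldDeriv hX hFs le_rfl) (contDiffAt_fieldDeriv hX hGs le_rfl) hF.2 hG.2

theorem mul_left (hX : ContDiffAt ℝ ∞ X x) (hk : ContDiffAt ℝ ∞ k x) (hFs : ContDiffAt ℝ ∞ F x)
    (hF : VanishesToOrder X x m F) : VanishesToOrder X x m (k * F) := by
  induction m generalizing F k with
  | zero => exact fun i hi => absurd hi i.not_lt_zero
  | succ m ih =>
    have hXk := contDiffAt_fieldDeriv hX hk le_rfl
    have hXF := contDiffAt_fieldDeriv hX hFs le_rfl
    have hF' := vanishesToOrder_succ.1 hF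
    refine vanishesToOrder_succ.2 ⟨by simp [hF'.1], congr ?_ (fieldDeriv_mul hk hFs (by simp)).symm⟩
    exact add hX (hk.mul hXF) (hXk.mul hFs) (ih hk hXF hF'.2) (ih hXk hFs (hF.mono m.le_succ))

theorem sub (hX : ContDiffAt ℝ ∞ X x) (hFs : ContDiffAt ℝ ∞ F x) (hGs : ContDiffAt ℝ ∞ G x)
    (hF : VanishesToOrder X x m F) (hG : VanishesToOrder X x m G) :
    VanishesToOrder X x m (F - G) := by
  have hneg : VanishesToOrder X x m (-G) := by
    simpa using hG.mul_left (k := -1) hX (contDiffAt_const (c := (-1 : ℝ))) hGs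
  rw [sub_eq_add_neg]
  exact hF.add hX hFs hGs.neg hneg

-- On `{l = 0}` the differential of `h` is a multiple of that of `l`, so that `X h = k * X l + h'`
-- with `h'` again zero on `{l = 0}`.
theorem of_eqOn_zeroLocus [CompleteSpace E] {h : E → ℝ} (hX : ContDiffAt ℝ ∞ X x)
    (hl : ContDiffAt ℝ ∞ l x) (hh : ContDiffAt ℝ ∞ h x) (hdl : fderiv ℝ l x ≠ 0)
    (hzero : ∀ᶠ p in 𝓝[{p | l p = 0}] x, h p = 0) (hlm : VanishesToOrder X x m l) :
    VanishesToOrder X x m h := by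
  induction m generalizing h with
  | zero => exact fun i hi => absurd hi i.not_lt_zero
  | succ m ih =>
    obtain ⟨hlx, hXlm⟩ := vanishesToOrder_succ.1 hlm
    have hl' : ContDiffAt ℝ ∞ (fderiv ℝ l) x := hl.fderiv_right le_rfl
    have hdh : ∀ᶠ p in 𝓝[{p | l p = 0}] x, ∃ k : ℝ, fderiv ℝ h p = k • fderiv ℝ l p := by
      have hl1 := (hl.of_le (m := 1) (by norm_cast)).eventually (by simp)
      have hh1 := (hh.of_le (m := 1) (by norm_cast)).eventually (by simp)
      filter_upwards [eventually_eventually_nhdsWithin.2 hzero, self_mem_nhdsWithin,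
        nhdsWithin_le_nhds hl1, nhdsWithin_le_nhds hh1,
        nhdsWithin_le_nhds (hl'.continuousAt.eventually_ne hdl)] with p hzp hlp hl1p hh1p hdlp
      exact exists_fderiv_eq_smul_of_eqOn_zeroLocus hl1p hh1p one_ne_zero hlp hdlp hzp
    obtain ⟨k, hk, hdk⟩ := exists_contDiffAt_smul_eq (hh.fderiv_right le_rfl) hl' hdl hdh
    have hXl := contDiffAt_fieldDeriv hX hl le_rfl
    have hrem : ContDiffAt ℝ ∞ (fieldDeriv X h - k * fieldDeriv X l) x :=
      (contDiffAt_fieldDeriv hX hh le_rfl).sub (hk.mul hXl)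
    have hrem0 : ∀ᶠ p in 𝓝[{p | l p = 0}] x, (fieldDeriv X h - k * fieldDeriv X l) p = 0 :=
      hdk.mono fun p hp => by simp [fieldDeriv, hp]
    refine vanishesToOrder_succ.2 ⟨hzero.self_of_nhdsWithin hlx, ?_⟩
    rw [← sub_add_cancel (fieldDeriv X h) (k * fieldDeriv X l)]
    exact add hX hrem (hk.mul hXl) (ih hrem hrem0 (hlm.mono m.le_succ)) (hXlm.mul_left hX hk hXl)

end VanishesToOrder

theorem vanishesToOrder_iff_of_zeroLocus_eq [CompleteSpace E] (hX : ContDiffAt ℝ ∞ X x)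
    (hF : ContDiffAt ℝ ∞ F x) (hG : ContDiffAt ℝ ∞ G x) (hdF : fderiv ℝ F x ≠ 0)
    (hdG : fderiv ℝ G x ≠ 0) (hFG : ∀ᶠ p in 𝓝 x, F p = 0 ↔ G p = 0) :
    VanishesToOrder X x m F ↔ VanishesToOrder X x m G :=
  ⟨.of_eqOn_zeroLocus hX hF hG hdF (eventually_nhdsWithin_iff.2 (hFG.mono fun _ hp => hp.1)),
    .of_eqOn_zeroLocus hX hG hF hdG (eventually_nhdsWithin_iff.2 (hFG.mono fun _ hp => hp.2))⟩

theorem vanishesToOrder_iff_of_eqOn_zeroLocus [CompleteSpace E] {c : E → ℝ}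
    (hX : ContDiffAt ℝ ∞ X x) (hl : ContDiffAt ℝ ∞ l x) (hF : ContDiffAt ℝ ∞ F x)
    (hG : ContDiffAt ℝ ∞ G x) (hc : ContDiffAt ℝ ∞ c x) (hcx : c x ≠ 0) (hdl : fderiv ℝ l x ≠ 0)
    (hFG : F =ᶠ[𝓝[{p | l p = 0}] x] c * G) (hlm : VanishesToOrder X x m l) :
    VanishesToOrder X x m F ↔ VanishesToOrder X x m G := by
  have hcG := hc.mul hG
  have hrem : VanishesToOrder X x m (F - c * G) :=
    hlm.of_eqOn_zeroLocus hX hl (hF.sub hcG) hdl (hFG.mono fun p hp => by simp [hp])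
  have hF_iff : VanishesToOrder X x m F ↔ VanishesToOrder X x m (c * G) := by
    refine ⟨fun h => ?_, fun h => ?_⟩
    · rw [← sub_sub_cancel F (c * G)]
      exact h.sub hX hF (hF.sub hcG) hrem
    · rw [← sub_add_cancel F (c * G)]
      exact hrem.add hX (hF.sub hcG) hcG h
  rw [hF_iff]
  refine ⟨fun h => (h.mul_left hX (hc.inv hcx) hcG).congr ?_, fun h => h.mul_left hX hc hG⟩
  filter_upwards [hc.continuousAt.eventually_ne hcx] with p hp
  simp [hp]

theorem vanishesToOrder_iff_of_chain [CompleteSpace E] {G : ℕ → E → ℝ} {c : E → ℝ}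
    (hX : ContDiffAt ℝ ∞ X x) (hG : ∀ j, ContDiffAt ℝ ∞ (G j) x) (hc : ContDiffAt ℝ ∞ c x)
    (hcx : c x ≠ 0) (hdG : fderiv ℝ (G 0) x ≠ 0)
    (hchain : ∀ j, fieldDeriv X (G j) =ᶠ[𝓝[{p | G 0 p = 0}] x] c * G (j + 1)) :
    VanishesToOrder X x m (G 0) ↔ ∀ j < m, G j x = 0 := by
  have hstep : ∀ n, VanishesToOrder X x n (G 0) → ∀ k ≤ n + 1, ∀ j,
      VanishesToOrder X x k (G j) ↔ ∀ i < k, G (j + i) x = 0 := by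
    intro n hn k
    induction k with
    | zero => simp [VanishesToOrder]
    | succ k ih =>
      intro hk j
      rw [vanishesToOrder_succ, vanishesToOrder_iff_of_eqOn_zeroLocus hX (hG 0)
        (contDiffAt_fieldDeriv hX (hG j) le_rfl) (hG (j + 1)) hc hcx hdG (hchain j)
        (hn.mono (Nat.le_of_succ_le_succ hk)), ih (Nat.le_of_succ_le hk), Nat.forall_lt_succ_left]
      simp only [add_zero, add_assoc, add_comm 1]
  induction m with
  | zero => simp [VanishesToOrder]
  | succ m ih =>
    refine ⟨fun h => ?_, fun h => ?_⟩
    · simpa using (hstep m (h.mono m.le_succ) (m + 1) le_rfl 0).1 h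
    · have hm := ih.2 fun j hj => h j (hj.trans m.lt_succ_self)
      exact (hstep m hm (m + 1) le_rfl 0).2 (by simpa using h)

theorem vanishesToOrder_comp_iff [CompleteSpace E] {E' : Type*} [NormedAddCommGroup E']
    [NormedSpace ℝ E'] {φ : E → E'} {Y : E' → E'} {l : E' → ℝ} {c : E → ℝ}
    (hφ : ContDiffAt ℝ ∞ φ x) (hX : ContDiffAt ℝ ∞ X x) (hY : ContDiffAt ℝ ∞ Y (φ x))
    (hl : ContDiffAt ℝ ∞ l (φ x)) (hc : ContDiffAt ℝ ∞ c x) (hcx : c x ≠ 0)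
    (hdl : fderiv ℝ (l ∘ φ) x ≠ 0)
    (hXY : ∀ᶠ p in 𝓝[{p | l (φ p) = 0}] x, fderiv ℝ φ p (X p) = c p • Y (φ p)) :
    VanishesToOrder X x m (l ∘ φ) ↔ VanishesToOrder Y (φ x) m l := by
  have hYl := contDiffAt_iterate_fieldDeriv hY hl
  refine vanishesToOrder_iff_of_chain (G := fun j => (fieldDeriv Y)^[j] l ∘ φ) hX
    (fun j => (hYl j).comp x hφ) hc hcx hdl fun j => ?_
  have hYlφ := hφ.continuousAt.eventually
    (eventually_differentiableAt_of_contDiffAt (hYl j) (by simp))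
  filter_upwards [hXY, nhdsWithin_le_nhds hYlφ,
    nhdsWithin_le_nhds (eventually_differentiableAt_of_contDiffAt hφ (by simp))] with p hp hlp hφp
  simp only [fieldDeriv, fderiv_comp p hlp hφp, ContinuousLinearMap.comp_apply, hp, map_smul,
    smul_eq_mul, Pi.mul_apply, Function.comp_apply, Function.iterate_succ_apply']

end VanishesToOrder

section Fderiv

variable {E : Type*} [NormedAddCommGroup E] [NormedSpace ℝ E] {x : E}

theorem fderiv_ne_zero_iff_of_eventuallyEq_mul {F G u : E → ℝ} (hu : DifferentiableAt ℝ u x)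
    (hG : DifferentiableAt ℝ G x) (hux : u x ≠ 0) (hGx : G x = 0) (h : F =ᶠ[𝓝 x] u * G) :
    fderiv ℝ F x ≠ 0 ↔ fderiv ℝ G x ≠ 0 := by
  simp [h.fderiv_eq, fderiv_mul hu hG, hGx, hux]

theorem fderiv_comp_ne_zero_iff {E' G : Type*} [NormedAddCommGroup E'] [NormedSpace ℝ E']
    [NormedAddCommGroup G] [NormedSpace ℝ G] {φ : E → E'} {h : E' → G}
    (hφ : DifferentiableAt ℝ φ x) (hh : DifferentiableAt ℝ h (φ x))
    (hφ' : Function.Surjective (fderiv ℝ φ x)) :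
    fderiv ℝ (h ∘ φ) x ≠ 0 ↔ fderiv ℝ h (φ x) ≠ 0 := by
  simp [fderiv_comp x hh hφ, ContinuousLinearMap.ext_iff, hφ'.forall]

end Fderiv

theorem exists_smul_eq_of_mem_ker {K V W : Type*} [DivisionRing K] [AddCommGroup V] [Module K V]
    [AddCommGroup W] [Module K W] {A : V →ₗ[K] W} (hV : Module.finrank K V = 2) (hA : A ≠ 0)
    {v w : V} (hv : A v = 0) (hv0 : v ≠ 0) (hw : A w = 0) : ∃ k : K, w = k • v := by
  have : FiniteDimensional K V := Module.finite_of_finrank_eq_succ hV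
  have hrange : Module.finrank K A.range ≠ 0 := by
    rwa [ne_eq, Submodule.finrank_eq_zero, LinearMap.range_eq_bot]
  have hker : Module.finrank K A.ker ≠ 0 := by
    rw [ne_eq, Submodule.finrank_eq_zero]
    exact fun h => hv0 (by simpa [h] using LinearMap.mem_ker.2 hv)
  have hker1 : Module.finrank K A.ker = 1 := by
    have := A.finrank_range_add_finrank_ker
    omega
  obtain ⟨k, hk⟩ := exists_smul_eq_of_finrank_eq_one hker1
    (x := ⟨v, LinearMap.mem_ker.2 hv⟩) (by simpa using hv0) ⟨w, LinearMap.mem_ker.2 hw⟩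
  exact ⟨k, (congrArg Subtype.val hk).symm⟩

section JacDet

variable {f g φ ψ η η' : ℝ × ℝ → ℝ × ℝ} {x : ℝ × ℝ} {m n : WithTop ℕ∞}

theorem jacDet_eq_det : jacDet f x = (fderiv ℝ f x).det := by
  rw [ContinuousLinearMap.det, ← LinearMap.det_toMatrix (Module.Basis.finTwoProd ℝ),
    Matrix.det_fin_two]
  simp [LinearMap.toMatrix_apply, jacDet, mul_comm]

theorem jacDet_eq_zero_iff : jacDet f x = 0 ↔ ¬ Function.Injective (fderiv ℝ f x) := by
  rw [jacDet_eq_det, LinearMap.det_eq_zero_iff_ker_ne_bot, ne_eq, LinearMap.ker_eq_bot]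
  rfl

theorem jacDet_comp (hf : DifferentiableAt ℝ f (φ x)) (hφ : DifferentiableAt ℝ φ x) :
    jacDet (f ∘ φ) x = jacDet f (φ x) * jacDet φ x := by
  simp only [jacDet_eq_det, fderiv_comp x hf hφ]
  exact LinearMap.det_comp _ _

theorem contDiffAt_jacDet (hf : ContDiffAt ℝ n f x) (hmn : m + 1 ≤ n) :
    ContDiffAt ℝ m (jacDet f) x := by
  have hcol : ∀ v, ContDiffAt ℝ m (fun p => fderiv ℝ f p v) x :=
    fun v => (hf.fderiv_right hmn).clm_apply contDiffAt_const
  exact ((hcol _).fst.mul (hcol _).snd).sub ((hcol _).snd.mul (hcol _).fst)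

theorem fderiv_jacDet_eq_zero (hf : ContDiffAt ℝ n f x) (hn : 2 ≤ n) (h : fderiv ℝ f x = 0) :
    fderiv ℝ (jacDet f) x = 0 := by
  have hf' : DifferentiableAt ℝ (fderiv ℝ f) x :=
    (hf.fderiv_right (m := 1) (one_add_one_eq_two.trans_le hn)).differentiableAt one_ne_zero
  have hcol : ∀ v, DifferentiableAt ℝ (fun p => fderiv ℝ f p v) x :=
    fun v => hf'.clm_apply (differentiableAt_const v)
  have hdiff := ((hcol (1, 0)).fst.hasFDerivAt.mul (hcol (0, 1)).snd.hasFDerivAt).sub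
    ((hcol (1, 0)).snd.hasFDerivAt.mul (hcol (0, 1)).fst.hasFDerivAt)
  exact hdiff.fderiv.trans (by simp [h])

theorem eventually_injective_fderiv (hf : ContDiffAt ℝ n f x) (hn : n ≠ 0)
    (h : Function.Injective (fderiv ℝ f x)) :
    ∀ᶠ p in 𝓝 x, Function.Injective (fderiv ℝ f p) := by
  have hx : jacDet f x ≠ 0 := fun h0 => jacDet_eq_zero_iff.1 h0 h
  have hcont : ContDiffAt ℝ 0 (jacDet f) x :=
    contDiffAt_jacDet hf (by simpa [ENat.one_le_iff_ne_zero_withTop] using hn)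
  exact (hcont.continuousAt.eventually_ne hx).mono fun p hp =>
    not_not.1 (mt jacDet_eq_zero_iff.2 hp)

theorem CorankOne.jacDet_eq_zero (hf : CorankOne f) : jacDet f 0 = 0 := by
  rw [jacDet_eq_zero_iff]
  intro hinj
  have hrange := LinearMap.finrank_range_of_inj (f := (fderiv ℝ f 0).toLinearMap) hinj
  have hrank : Module.finrank ℝ (fderiv ℝ f 0).toLinearMap.range = 1 :=
    (congrArg Cardinal.toNat hf).trans (by simp)
  simp [hrank] at hrange

theorem IsNullVF.contDiffAt (hη : IsNullVF f η) : ContDiffAt ℝ ∞ η 0 :=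
  let ⟨_, _, hU, hsmooth, _⟩ := hη
  hsmooth.contDiffAt hU

theorem IsNullVF.eventually_fderiv_eq_zero (hη : IsNullVF f η) :
    ∀ᶠ p in 𝓝 0, jacDet f p = 0 → fderiv ℝ f p (η p) = 0 :=
  let ⟨_, _, hU, _, hnull⟩ := hη
  eventually_of_mem hU hnull

theorem exists_jacDet_eventuallyEq_mul (hf : ContDiffAt ℝ ∞ f (φ x)) (hφ : ContDiffAt ℝ ∞ φ x)
    (hψ : ContDiffAt ℝ ∞ ψ (f (φ x))) (hφ' : Function.Injective (fderiv ℝ φ x))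
    (hψ' : Function.Injective (fderiv ℝ ψ (f (φ x)))) (hg : g =ᶠ[𝓝 x] ψ ∘ f ∘ φ) :
    ∃ u : ℝ × ℝ → ℝ, ContDiffAt ℝ ∞ u x ∧ u x ≠ 0 ∧ jacDet g =ᶠ[𝓝 x] u * (jacDet f ∘ φ) := by
  have hfφ : ContDiffAt ℝ ∞ (f ∘ φ) x := hf.comp x hφ
  refine ⟨(jacDet ψ ∘ f ∘ φ) * jacDet φ, ?_, ?_, ?_⟩
  · exact ((contDiffAt_jacDet hψ le_rfl).comp x hfφ).mul (contDiffAt_jacDet hφ le_rfl)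
  · exact mul_ne_zero (fun h => jacDet_eq_zero_iff.1 h hψ') fun h => jacDet_eq_zero_iff.1 h hφ'
  · filter_upwards [hg.fderiv (𝕜 := ℝ),
      eventually_differentiableAt_of_contDiffAt hφ (by simp),
      hφ.continuousAt.eventually (eventually_differentiableAt_of_contDiffAt hf (by simp)),
      hfφ.continuousAt.eventually (eventually_differentiableAt_of_contDiffAt hψ (by simp))]
      with p hgp hφp hfp hψp
    calc jacDet g p = jacDet (ψ ∘ f ∘ φ) p := by rw [jacDet_eq_det, hgp, jacDet_eq_det]
      _ = jacDet ψ (f (φ p)) * (jacDet f (φ p) * jacDet φ p) := by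
        rw [jacDet_comp hψp (hfp.comp p hφp), jacDet_comp hfp hφp, Function.comp_apply]
      _ = ((jacDet ψ ∘ f ∘ φ) * jacDet φ * (jacDet f ∘ φ)) p := by
        simp only [Pi.mul_apply, Function.comp_apply]
        ring

theorem eventually_fderiv_eq_smul_of_null (hf : ContDiffAt ℝ ∞ f (φ x)) (hφ : ContDiffAt ℝ ∞ φ x)
    (hψ : ContDiffAt ℝ ∞ ψ (f (φ x))) (hφ' : Function.Injective (fderiv ℝ φ x))
    (hψ' : Function.Injective (fderiv ℝ ψ (f (φ x)))) (hg : g =ᶠ[𝓝 x] ψ ∘ f ∘ φ)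
    (hdf : fderiv ℝ f (φ x) ≠ 0) (hη : ContinuousAt η (φ x)) (hηx : η (φ x) ≠ 0)
    (hnull : ∀ᶠ q in 𝓝 (φ x), jacDet f q = 0 → fderiv ℝ f q (η q) = 0)
    (hnull' : ∀ᶠ p in 𝓝 x, jacDet g p = 0 → fderiv ℝ g p (η' p) = 0) :
    ∀ᶠ p in 𝓝[{p | jacDet f (φ p) = 0}] x, ∃ k : ℝ, fderiv ℝ φ p (η' p) = k • η (φ p) := by
  have hfφ : ContDiffAt ℝ ∞ (f ∘ φ) x := hf.comp x hφ
  obtain ⟨u, -, -, hu⟩ := exists_jacDet_eventuallyEq_mul hf hφ hψ hφ' hψ' hg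
  rw [eventually_nhdsWithin_iff]
  filter_upwards [hu, hnull', hg.fderiv (𝕜 := ℝ), hφ.continuousAt.eventually hnull,
    hfφ.continuousAt.eventually (eventually_injective_fderiv hψ (by simp) hψ'),
    hφ.continuousAt.eventually (hη.eventually_ne hηx),
    hφ.continuousAt.eventually ((hf.fderiv_right (m := ∞) le_rfl).continuousAt.eventually_ne hdf),
    eventually_differentiableAt_of_contDiffAt hφ (by simp),
    hφ.continuousAt.eventually (eventually_differentiableAt_of_contDiffAt hf (by simp)),
    hfφ.continuousAt.eventually (eventually_differentiableAt_of_contDiffAt hψ (by simp))]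
    with p hup hnull'p hgp hnullp hψp hηp hdfp hφp hfp hψdp hp
  have hgη : fderiv ℝ ψ (f (φ p)) (fderiv ℝ f (φ p) (fderiv ℝ φ p (η' p))) = 0 := by
    have := hnull'p (by simpa [hup] using Or.inr hp)
    rwa [hgp, fderiv_comp p hψdp (hfp.comp p hφp), fderiv_comp p hfp hφp] at this
  exact exists_smul_eq_of_mem_ker (A := (fderiv ℝ f (φ p)).toLinearMap) (by simp)
    (fun h => hdfp (ContinuousLinearMap.coe_injective h)) (hnullp hp) hηp
    (hψp (hgη.trans (map_zero _).symm))

theorem fderiv_jacDet_ne_zero_iff (hf : ContDiffAt ℝ ∞ f (φ x)) (hφ : ContDiffAt ℝ ∞ φ x)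
    (hψ : ContDiffAt ℝ ∞ ψ (f (φ x))) (hφ' : Function.Bijective (fderiv ℝ φ x))
    (hψ' : Function.Injective (fderiv ℝ ψ (f (φ x)))) (hg : g =ᶠ[𝓝 x] ψ ∘ f ∘ φ)
    (hfx : jacDet f (φ x) = 0) :
    fderiv ℝ (jacDet g) x ≠ 0 ↔ fderiv ℝ (jacDet f) (φ x) ≠ 0 := by
  obtain ⟨u, hu, hux, hgu⟩ := exists_jacDet_eventuallyEq_mul hf hφ hψ hφ'.1 hψ' hg
  have hdet : DifferentiableAt ℝ (jacDet f) (φ x) :=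
    (contDiffAt_jacDet (m := ∞) hf le_rfl).differentiableAt (by simp)
  have hφd : DifferentiableAt ℝ φ x := hφ.differentiableAt (by simp)
  rw [fderiv_ne_zero_iff_of_eventuallyEq_mul (hu.differentiableAt (by simp)) (hdet.comp x hφd)
    hux hfx hgu, fderiv_comp_ne_zero_iff hφd hdet hφ'.2]

theorem vanishesToOrder_jacDet_iff {k : ℕ} (hf : ContDiffAt ℝ ∞ f (φ x))
    (hφ : ContDiffAt ℝ ∞ φ x) (hψ : ContDiffAt ℝ ∞ ψ (f (φ x)))
    (hφ' : Function.Bijective (fderiv ℝ φ x))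
    (hψ' : Function.Injective (fderiv ℝ ψ (f (φ x)))) (hg : g =ᶠ[𝓝 x] ψ ∘ f ∘ φ)
    (hfx : jacDet f (φ x) = 0) (hdf : fderiv ℝ (jacDet f) (φ x) ≠ 0)
    (hη : ContDiffAt ℝ ∞ η (φ x)) (hη' : ContDiffAt ℝ ∞ η' x) (hηx : η (φ x) ≠ 0)
    (hη'x : η' x ≠ 0) (hnull : ∀ᶠ q in 𝓝 (φ x), jacDet f q = 0 → fderiv ℝ f q (η q) = 0)
    (hnull' : ∀ᶠ p in 𝓝 x, jacDet g p = 0 → fderiv ℝ g p (η' p) = 0) :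
    VanishesToOrder η' x k (jacDet g) ↔ VanishesToOrder η (φ x) k (jacDet f) := by
  have hdet : ContDiffAt ℝ ∞ (jacDet f) (φ x) := contDiffAt_jacDet hf le_rfl
  have hgs : ContDiffAt ℝ ∞ g x := (hψ.comp x (hf.comp x hφ)).congr_of_eventuallyEq hg
  obtain ⟨u, hu, hux, hgu⟩ := exists_jacDet_eventuallyEq_mul hf hφ hψ hφ'.1 hψ' hg
  have hzero : ∀ᶠ p in 𝓝 x, jacDet g p = 0 ↔ (jacDet f ∘ φ) p = 0 := by
    filter_upwards [hgu, hu.continuousAt.eventually_ne hux] with p hp hup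
    simp [hp, hup]
  have hdg := (fderiv_jacDet_ne_zero_iff hf hφ hψ hφ' hψ' hg hfx).2 hdf
  have hdfφ : fderiv ℝ (jacDet f ∘ φ) x ≠ 0 := (fderiv_comp_ne_zero_iff
    (hφ.differentiableAt (by simp)) (hdet.differentiableAt (by simp)) hφ'.2).2 hdf
  have hrank : fderiv ℝ f (φ x) ≠ 0 :=
    mt (fderiv_jacDet_eq_zero hf (by norm_cast)) hdf
  obtain ⟨c, hc, hηc⟩ := exists_contDiffAt_smul_eq ((hφ.fderiv_right le_rfl).clm_apply hη')
    (hη.comp x hφ) hηx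
    (eventually_fderiv_eq_smul_of_null hf hφ hψ hφ'.1 hψ' hg hrank hη.continuousAt hηx hnull hnull')
  have hcx : c x ≠ 0 := by
    intro hc0
    have hx : fderiv ℝ φ x (η' x) = 0 := by simpa [hc0] using hηc.self_of_nhdsWithin hfx
    exact hη'x (hφ'.1 (hx.trans (map_zero _).symm))
  rw [vanishesToOrder_iff_of_zeroLocus_eq hη' (contDiffAt_jacDet hgs le_rfl) (hdet.comp x hφ) hdg
    hdfφ hzero, vanishesToOrder_comp_iff hφ hη' hη hdet hc hcx hdfφ hηc]

end JacDet

theorem etaIter_eq_zero_and_ne_zero_iff {η : ℝ × ℝ → ℝ × ℝ} {l : ℝ × ℝ → ℝ} {m : ℕ}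
    (hl : l 0 = 0) :
    ((∀ i, 1 ≤ i → i ≤ m → etaIter η i l 0 = 0) ∧ etaIter η (m + 1) l 0 ≠ 0) ↔
      VanishesToOrder η 0 (m + 1) l ∧ ¬ VanishesToOrder η 0 (m + 2) l := by
  have hvan : VanishesToOrder η 0 (m + 1) l ↔ ∀ i, 1 ≤ i → i ≤ m → etaIter η i l 0 = 0 := by
    simp only [etaIter_eq_iterate_fieldDeriv]
    refine ⟨fun h i _ hi => h i (Nat.lt_succ_of_le hi), fun h i hi => ?_⟩
    rcases i.eq_zero_or_pos with rfl | hpos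
    · exact hl
    · exact h i hpos (Nat.le_of_lt_succ hi)
  rw [vanishesToOrder_succ_iff_and_iterate (m := m + 1), hvan, etaIter_eq_iterate_fieldDeriv]
  tauto

theorem stmt0_general {f g φ ψ η η' : ℝ × ℝ → ℝ × ℝ} (hf : ContDiffAt ℝ ∞ f 0)
    (hf0 : jacDet f 0 = 0) (hφ : ContDiffAt ℝ ∞ φ 0) (hψ : ContDiffAt ℝ ∞ ψ (f 0)) (hφ0 : φ 0 = 0)
    (hφ' : Function.Bijective (fderiv ℝ φ 0)) (hψ' : Function.Bijective (fderiv ℝ ψ (f 0)))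
    (hg : g =ᶠ[𝓝 0] ψ ∘ f ∘ φ) (hη : IsNullVF f η) (hη' : IsNullVF g η') {r : ℕ} (hr : 2 ≤ r) :
    (fderiv ℝ (jacDet f) 0 ≠ 0 ∧
        (∀ i, 1 ≤ i → i ≤ r - 2 → etaIter η i (jacDet f) 0 = 0) ∧
        etaIter η (r - 1) (jacDet f) 0 ≠ 0) ↔
      (fderiv ℝ (jacDet g) 0 ≠ 0 ∧
        (∀ i, 1 ≤ i → i ≤ r - 2 → etaIter η' i (jacDet g) 0 = 0) ∧
        etaIter η' (r - 1) (jacDet g) 0 ≠ 0) := by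
  obtain ⟨m, rfl⟩ := Nat.exists_eq_add_of_le' hr
  rw [← hφ0] at hf hf0 hψ hψ'
  have hg0 : jacDet g 0 = 0 := by
    obtain ⟨u, -, -, hu⟩ := exists_jacDet_eventuallyEq_mul hf hφ hψ hφ'.1 hψ'.1 hg
    simpa [hf0] using hu.eq_of_nhds
  have hd := fderiv_jacDet_ne_zero_iff hf hφ hψ hφ' hψ'.1 hg hf0
  have hηs : ContDiffAt ℝ ∞ η (φ 0) := by rw [hφ0]; exact hη.contDiffAt
  have hη0 : η (φ 0) ≠ 0 := by rw [hφ0]; exact hη.1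
  have hnull : ∀ᶠ q in 𝓝 (φ 0), jacDet f q = 0 → fderiv ℝ f q (η q) = 0 := by
    rw [hφ0]; exact hη.eventually_fderiv_eq_zero
  have hord (hdf : fderiv ℝ (jacDet f) (φ 0) ≠ 0) (k : ℕ) :=
    vanishesToOrder_jacDet_iff (k := k) hf hφ hψ hφ' hψ'.1 hg hf0 hdf hηs hη'.contDiffAt hη0 hη'.1
      hnull hη'.eventually_fderiv_eq_zero
  rw [hφ0] at hf0 hd hord
  rw [hd]
  refine and_congr_right fun hdf => ?_
  exact (etaIter_eq_zero_and_ne_zero_iff hf0).trans <|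
    (and_congr (hord hdf _).symm (not_congr (hord hdf _).symm)).trans
      (etaIter_eq_zero_and_ne_zero_iff hg0).symm

/-- Independence of the `η^i λ` conditions from coordinates and choice of null vector field. -/
theorem stmt0 (f g φ ψ η η' : ℝ × ℝ → ℝ × ℝ)
    (hf : ContDiff ℝ (⊤ : ℕ∞) f) (hf0 : f 0 = 0) (hcr : CorankOne f)
    (hφ : ContDiff ℝ (⊤ : ℕ∞) φ) (hψ : ContDiff ℝ (⊤ : ℕ∞) ψ)
    (hφ0 : φ 0 = 0) (hψ0 : ψ 0 = 0)
    (hφ' : Function.Bijective (⇑(fderiv ℝ φ 0))) (hψ' : Function.Bijective (⇑(fderiv ℝ ψ 0)))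
    (hg : ∀ᶠ p in 𝓝 (0 : ℝ × ℝ), g p = ψ (f (φ p)))
    (hη : IsNullVF f η) (hη' : IsNullVF g η') :
    ∀ r : ℕ, 3 ≤ r →
      ((fderiv ℝ (jacDet f) 0 ≠ 0 ∧
          (∀ i, 1 ≤ i → i ≤ r - 2 → etaIter η i (jacDet f) 0 = 0) ∧
          etaIter η (r - 1) (jacDet f) 0 ≠ 0) ↔
        (fderiv ℝ (jacDet g) 0 ≠ 0 ∧
          (∀ i, 1 ≤ i → i ≤ r - 2 → etaIter η' i (jacDet g) 0 = 0) ∧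
          etaIter η' (r - 1) (jacDet g) 0 ≠ 0)) := by
  intro r hr
  exact stmt0_general hf.contDiffAt hcr.jacDet_eq_zero hφ.contDiffAt hψ.contDiffAt hφ0 hφ'
    (by rwa [hf0]) hg hη hη' (by omega)
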